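/- arXiv:1706.06928 — 2 statements merged into one kernel-verified Lean document; each statement's English description precedes it below -/
import Mathlib

section
/- Let u : ℝ → ℝ be a continuous integrable function with u(x) → 0 as |x| → ∞, which is differentiable almost everywhere with integrable derivative u′ satisfying the fundamental theorem of calculus u(b) − u(a) = ∫_a^b u′(t) dt for all a < b, and suppose u′(x) ≥ 0 for almost every x < 0 and u′(x) ≤ 0 for almost every x > 0 (i.e. sgn u′(x) = −sgn x a.e.). Then equality holds in the one-dimensional optimal embedding inequality: ‖u‖_∞ = u(0) = (1/2) ∫_ℝ |u′(t)| dt. In particular u(x) = e^{−|x|} satisfies ‖u‖_∞ = (1/2)∫_ℝ|u′|. -/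
open MeasureTheory Filter

/-!
If `u` vanishes at `±∞`, then `u x` is both the integral of `u'` over `(-∞, x]` and minus its
integral over `(x, ∞)`. Averaging the two representations gives `|u x| ≤ (1 / 2) * ∫ |u'|`. If `u'`
changes sign at `x` from nonnegative to nonpositive, no cancellation occurs in this average, so
equality holds there; the inequality at all other points then shows that `u x` is the maximum.
-/

section

open Set

section Primitive

variable {E : Type*} [NormedAddCommGroup E] [NormedSpace ℝ E] {μ : Measure ℝ} {u f : ℝ → E} {l : E}

lemma integral_Iic_eq_sub_of_tendsto {b : ℝ} (hf : IntegrableOn f (Iic b) μ)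
    (hu : ∀ a < b, u b - u a = ∫ t in a..b, f t ∂μ) (hbot : Tendsto u atBot (nhds l)) :
    ∫ t in Iic b, f t ∂μ = u b - l := by
  refine tendsto_nhds_unique (intervalIntegral_tendsto_integral_Iic b hf tendsto_id) ?_
  refine (hbot.const_sub (u b)).congr' ?_
  filter_upwards [eventually_lt_atBot b] with a hab using hu a hab

lemma integral_Ioi_eq_sub_of_tendsto {a : ℝ} (hf : IntegrableOn f (Ioi a) μ)
    (hu : ∀ b > a, u b - u a = ∫ t in a..b, f t ∂μ) (htop : Tendsto u atTop (nhds l)) :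
    ∫ t in Ioi a, f t ∂μ = l - u a := by
  refine tendsto_nhds_unique (intervalIntegral_tendsto_integral_Ioi a hf tendsto_id) ?_
  refine (htop.sub_const (u a)).congr' ?_
  filter_upwards [eventually_gt_atTop a] with b hab using hu b hab

lemma integral_Iic_sub_integral_Ioi_eq_two_smul (hf : Integrable f μ)
    (hu : ∀ a b : ℝ, a < b → u b - u a = ∫ t in a..b, f t ∂μ)
    (htop : Tendsto u atTop (nhds 0)) (hbot : Tendsto u atBot (nhds 0)) (x : ℝ) :
    ∫ t in Iic x, f t ∂μ - ∫ t in Ioi x, f t ∂μ = (2 : ℝ) • u x := by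
  rw [integral_Iic_eq_sub_of_tendsto hf.integrableOn (fun a ↦ hu a x) hbot,
    integral_Ioi_eq_sub_of_tendsto hf.integrableOn (fun b ↦ hu x b) htop]
  module

theorem norm_le_half_integral_norm (hf : Integrable f μ)
    (hu : ∀ a b : ℝ, a < b → u b - u a = ∫ t in a..b, f t ∂μ)
    (htop : Tendsto u atTop (nhds 0)) (hbot : Tendsto u atBot (nhds 0)) (x : ℝ) :
    ‖u x‖ ≤ (1 / 2) * ∫ t, ‖f t‖ ∂μ := by
  have two_mul_norm_le : 2 * ‖u x‖ ≤ ∫ t, ‖f t‖ ∂μ :=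
    calc 2 * ‖u x‖ = ‖∫ t in Iic x, f t ∂μ - ∫ t in Ioi x, f t ∂μ‖ := by
          rw [integral_Iic_sub_integral_Ioi_eq_two_smul hf hu htop hbot, norm_smul,
            Real.norm_ofNat]
      _ ≤ ‖∫ t in Iic x, f t ∂μ‖ + ‖∫ t in Ioi x, f t ∂μ‖ := norm_sub_le _ _
      _ ≤ ∫ t in Iic x, ‖f t‖ ∂μ + ∫ t in Ioi x, ‖f t‖ ∂μ :=
          add_le_add (norm_integral_le_integral_norm _) (norm_integral_le_integral_norm _)
      _ = ∫ t, ‖f t‖ ∂μ :=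
          intervalIntegral.integral_Iic_add_Ioi hf.norm.integrableOn hf.norm.integrableOn
  linarith

end Primitive

lemma integral_abs_eq_integral_Iic_sub_integral_Ioi {μ : Measure ℝ} {f : ℝ → ℝ} {c : ℝ}
    (hf : Integrable f μ) (hleft : ∀ᵐ x ∂μ, x ≤ c → 0 ≤ f x) (hright : ∀ᵐ x ∂μ, c < x → f x ≤ 0) :
    ∫ x, |f x| ∂μ = ∫ x in Iic c, f x ∂μ - ∫ x in Ioi c, f x ∂μ := by
  have abs_left : ∫ x in Iic c, |f x| ∂μ = ∫ x in Iic c, f x ∂μ :=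
    setIntegral_congr_ae measurableSet_Iic (hleft.mono fun _ h hx ↦ abs_of_nonneg (h hx))
  have abs_right : ∫ x in Ioi c, |f x| ∂μ = -∫ x in Ioi c, f x ∂μ := by
    rw [← integral_neg]
    exact setIntegral_congr_ae measurableSet_Ioi (hright.mono fun _ h hx ↦ abs_of_nonpos (h hx))
  rw [← intervalIntegral.integral_Iic_add_Ioi hf.abs.integrableOn hf.abs.integrableOn, abs_left,
    abs_right, sub_eq_add_neg]

theorem statement16_general {u u' : ℝ → ℝ} {c : ℝ}
    (htop : Tendsto u atTop (nhds 0)) (hbot : Tendsto u atBot (nhds 0)) (hint' : Integrable u')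
    (hftc : ∀ a b : ℝ, a < b → u b - u a = ∫ t in a..b, u' t)
    (hleft : ∀ᵐ x : ℝ, x < c → 0 ≤ u' x) (hright : ∀ᵐ x : ℝ, c < x → u' x ≤ 0) :
    (∀ x, |u x| ≤ u c) ∧ u c = (1 / 2) * ∫ t : ℝ, |u' t| := by
  have hleft' : ∀ᵐ x : ℝ, x ≤ c → 0 ≤ u' x := by
    filter_upwards [hleft, volume.ae_ne c] with x hx hne hle using hx (hle.lt_of_ne hne)
  have peak_eq : u c = (1 / 2) * ∫ t : ℝ, |u' t| := by
    rw [integral_abs_eq_integral_Iic_sub_integral_Ioi hint' hleft' hright,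
      integral_Iic_sub_integral_Ioi_eq_two_smul hint' hftc htop hbot, smul_eq_mul]
    ring
  refine ⟨fun x ↦ ?_, peak_eq⟩
  rw [peak_eq]
  exact norm_le_half_integral_norm hint' hftc htop hbot x

lemma hasDerivAt_exp_neg_abs_of_neg {x : ℝ} (hx : x < 0) :
    HasDerivAt (fun t : ℝ ↦ Real.exp (-|t|)) (Real.exp x) x := by
  simpa [abs_of_neg hx] using (hasDerivAt_abs_neg hx).neg.exp

lemma hasDerivAt_exp_neg_abs_of_pos {x : ℝ} (hx : 0 < x) :
    HasDerivAt (fun t : ℝ ↦ Real.exp (-|t|)) (-Real.exp (-x)) x := by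
  simpa [abs_of_pos hx] using (hasDerivAt_abs_pos hx).neg.exp

lemma differentiableAt_exp_neg_abs {x : ℝ} (hx : x ≠ 0) :
    DifferentiableAt ℝ (fun t : ℝ ↦ Real.exp (-|t|)) x :=
  ((differentiableAt_abs hx).neg).exp

lemma integrable_deriv_exp_neg_abs : Integrable (deriv fun t : ℝ ↦ Real.exp (-|t|)) := by
  have left : IntegrableOn (deriv fun t : ℝ ↦ Real.exp (-|t|)) (Iio 0) :=
    ((integrableOn_exp_Iic 0).mono_set Iio_subset_Iic_self).congr_fun
      (fun _ hx ↦ (hasDerivAt_exp_neg_abs_of_neg hx).deriv.symm) measurableSet_Iio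
  have right : IntegrableOn (deriv fun t : ℝ ↦ Real.exp (-|t|)) (Ioi 0) :=
    (integrableOn_exp_neg_Ioi 0).neg.congr_fun
      (fun _ hx ↦ (hasDerivAt_exp_neg_abs_of_pos hx).deriv.symm) measurableSet_Ioi
  rw [← integrableOn_univ, ← Iio_union_Ici (a := (0 : ℝ))]
  exact left.union ((integrableOn_Ici_iff_integrableOn_Ioi).mpr right)

lemma integral_deriv_exp_neg_abs (a b : ℝ) :
    ∫ t in a..b, deriv (fun t : ℝ ↦ Real.exp (-|t|)) t = Real.exp (-|b|) - Real.exp (-|a|) :=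
  integral_eq_of_hasDerivAt_off_countable _ _ (countable_singleton 0) (by fun_prop)
    (fun _ hx ↦ (differentiableAt_exp_neg_abs hx.2).hasDerivAt)
    integrable_deriv_exp_neg_abs.intervalIntegrable

theorem iSup_abs_exp_neg_abs_eq_half_integral_abs_deriv :
    (⨆ x : ℝ, |Real.exp (-|x|)|) =
      (1 / 2) * ∫ x : ℝ, |deriv (fun t : ℝ ↦ Real.exp (-|t|)) x| := by
  obtain ⟨abs_le_peak, peak_eq⟩ := statement16_general (c := 0)
    (Real.tendsto_exp_neg_atTop_nhds_zero.comp tendsto_abs_atTop_atTop)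
    (Real.tendsto_exp_neg_atTop_nhds_zero.comp tendsto_abs_atBot_atTop)
    integrable_deriv_exp_neg_abs (fun a b _ ↦ (integral_deriv_exp_neg_abs a b).symm)
    (.of_forall fun x hx ↦ (hasDerivAt_exp_neg_abs_of_neg hx).deriv ▸ (Real.exp_pos x).le)
    (.of_forall fun x hx ↦ (hasDerivAt_exp_neg_abs_of_pos hx).deriv ▸
      neg_nonpos.mpr (Real.exp_pos (-x)).le)
  rw [← peak_eq]
  exact IsGreatest.csSup_eq ⟨⟨0, Real.abs_exp _⟩, forall_mem_range.mpr abs_le_peak⟩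

end

/-- equality cases of the one-dimensional inequality
`‖u‖_∞ ≤ (1/2)∫|u'|`: if `u` is continuous, integrable, vanishes at `±∞`, is a.e.
differentiable with integrable derivative `u'` satisfying the fundamental theorem of
calculus, and `sgn u' = -sgn x` a.e., then `‖u‖_∞ = u(0) = (1/2)∫_ℝ |u'|`.
In particular `u(x) = e^{-|x|}` realizes equality. -/
theorem statement16 (u u' : ℝ → ℝ)
    (hcont : Continuous u) (hint : Integrable u)
    (htop : Tendsto u atTop (nhds 0)) (hbot : Tendsto u atBot (nhds 0))
    (hderiv : ∀ᵐ x : ℝ, HasDerivAt u (u' x) x) (hint' : Integrable u')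
    (hftc : ∀ a b : ℝ, a < b → u b - u a = ∫ t in a..b, u' t)
    (hsign₁ : ∀ᵐ x : ℝ, x < 0 → 0 ≤ u' x)
    (hsign₂ : ∀ᵐ x : ℝ, 0 < x → u' x ≤ 0) :
    ((∀ x, |u x| ≤ u 0) ∧ u 0 = (1 / 2) * ∫ t : ℝ, |u' t|) ∧
      (⨆ x : ℝ, |Real.exp (-|x|)|) =
        (1 / 2) * ∫ x : ℝ, |deriv (fun t : ℝ => Real.exp (-|t|)) x| :=
  ⟨statement16_general htop hbot hint' hftc hsign₁ hsign₂,
    iSup_abs_exp_neg_abs_eq_half_integral_abs_deriv⟩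
end

section
/- The first values of the constants ℓ_N are: ℓ_1 = 1, ℓ_2 = 2, and ℓ_3 = 28. Equivalently: for N = 1, |d log|x|/dx|² · |x|² = 1 for x ≠ 0; for N = 2, ∑_{(i_1,i_2)∈{1,2}²} (∂² log|x|/∂x_{i_1}∂x_{i_2}(x))² · |x|⁴ = 2 for x ∈ ℝ²∖{0}; and for N = 3, ∑_{(i_1,i_2,i_3)∈{1,2,3}³} (∂³ log|x|/∂x_{i_1}∂x_{i_2}∂x_{i_3}(x))² · |x|⁶ = 28 for x ∈ ℝ³∖{0}. Consequently the optimal embedding constants are K_1 = 1/2, K_2 = 1/(2π√2), and K_3 = 1/(4π√28). -/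
open MeasureTheory Metric Filter Matrix

noncomputable section

/-- The mixed partial derivative `∂^m u / ∂x_{i 0} ⋯ ∂x_{i (m-1)} (x)`, realized as the
iterated Fréchet derivative applied to the corresponding standard basis vectors. -/
def mixedPartial (N m : ℕ) (u : EuclideanSpace ℝ (Fin N) → ℝ)
    (i : Fin m → Fin N) (x : EuclideanSpace ℝ (Fin N)) : ℝ :=
  iteratedFDeriv ℝ m u x fun k => EuclideanSpace.single (i k) 1

/-- The Frobenius norm `|∇^m u (x)|` of the tensor of `m`-th order partial derivatives. -/
def gradNorm (N m : ℕ) (u : EuclideanSpace ℝ (Fin N) → ℝ)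
    (x : EuclideanSpace ℝ (Fin N)) : ℝ :=
  Real.sqrt (∑ i : Fin m → Fin N, mixedPartial N m u i x ^ 2)

/-- The function `x ↦ log |x|`. -/
def logNorm (N : ℕ) (x : EuclideanSpace ℝ (Fin N)) : ℝ := Real.log ‖x‖

/-- The constant `ℓ_N = ∑ (∂^N log|x|/∂x_{i_1}⋯∂x_{i_N} (e_1))²`. -/
def ell (N : ℕ) (hN : 0 < N) : ℝ :=
  ∑ i : Fin N → Fin N,
    mixedPartial N N (logNorm N) i (EuclideanSpace.single (⟨0, hN⟩ : Fin N) 1) ^ 2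

/-- `ω_{N-1}`, the surface measure of the unit sphere `𝕊^{N-1} ⊂ ℝ^N`,
expressed as `N` times the volume of the unit ball. -/
def omegaSphere (N : ℕ) : ℝ :=
  N * (volume (ball (0 : EuclideanSpace ℝ (Fin N)) 1)).toReal

/-!
Since `∇|x|^k = k |x|^(k-2) x`, every derivative of `log |x|` is a combination of products of inner
products with powers of `|x|`: with `r = |x|` and `g` the metric,
`D² log |x| = r⁻² g - 2 r⁻⁴ x ⊗ x`, and `D³ log |x|` is `8 r⁻⁶ x ⊗ x ⊗ x` minus `2 r⁻⁴` times the
sum of the three placements of `g ⊗ x`. Freezing all arguments but the last leaves a functional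
`⟪·, w⟫`, so Parseval's identity computes the last sum of a Frobenius norm as `|w|²`, and the
remaining sums are again of Parseval type. In dimension `N` this gives the values `r⁻²`, `N r⁻⁴`
and `(12 N - 8) r⁻⁶` for the orders one, two and three.
-/

open scoped RealInnerProductSpace

section IteratedDerivatives

variable {𝕜 E F : Type*} [NontriviallyNormedField 𝕜] [NormedAddCommGroup E] [NormedSpace 𝕜 E]
  [NormedAddCommGroup F] [NormedSpace 𝕜 F]

lemma iteratedFDeriv_succ_apply_eq_of_hasFDerivAt {n : ℕ} {f g : E → F} {g' : E →L[𝕜] F} {x : E}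
    {v : Fin (n + 1) → E} (hf : DifferentiableAt 𝕜 (iteratedFDeriv 𝕜 n f) x)
    (hfg : (fun y ↦ iteratedFDeriv 𝕜 n f y (Fin.tail v)) =ᶠ[nhds x] g)
    (hg : HasFDerivAt g g' x) :
    iteratedFDeriv 𝕜 (n + 1) f x v = g' (v 0) := by
  rw [hf.iteratedFDeriv_succ_apply_left', hfg.fderiv_eq, hg.fderiv]

end IteratedDerivatives

section LogNorm

variable {E : Type*} [NormedAddCommGroup E] [InnerProductSpace ℝ E] {x : E}

lemma hasFDerivAt_norm (hx : x ≠ 0) :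
    HasFDerivAt (fun y : E ↦ ‖y‖) (‖x‖⁻¹ • innerSL ℝ x) x := by
  have hsq : ‖x‖ ^ 2 ≠ 0 := pow_ne_zero 2 (norm_ne_zero_iff.2 hx)
  have hsqrt := (hasStrictFDerivAt_norm_sq x).hasFDerivAt.sqrt hsq
  simp only [Real.sqrt_sq (norm_nonneg _)] at hsqrt
  refine hsqrt.congr_fderiv ?_
  ext v
  simp only [nsmul_eq_mul, Nat.cast_ofNat, _root_.smul_apply, coe_innerSL_apply, smul_eq_mul]
  field_simp

lemma hasFDerivAt_norm_zpow (n : ℤ) (hx : x ≠ 0) :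
    HasFDerivAt (fun y : E ↦ ‖y‖ ^ n) ((n * ‖x‖ ^ (n - 2)) • innerSL ℝ x) x := by
  have hx' : ‖x‖ ≠ 0 := norm_ne_zero_iff.2 hx
  refine ((hasDerivAt_zpow n ‖x‖ (.inl hx')).comp_hasFDerivAt x
    (hasFDerivAt_norm hx)).congr_fderiv ?_
  rw [smul_smul, mul_assoc, ← zpow_sub_one₀ hx', sub_sub, one_add_one_eq_two]

lemma hasFDerivAt_log_norm (hx : x ≠ 0) :
    HasFDerivAt (fun y : E ↦ Real.log ‖y‖) (‖x‖ ^ (-2 : ℤ) • innerSL ℝ x) x := by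
  have hx' : ‖x‖ ≠ 0 := norm_ne_zero_iff.2 hx
  refine ((hasFDerivAt_norm hx).log hx').congr_fderiv ?_
  rw [smul_smul, _root_.zpow_neg, zpow_ofNat, sq, mul_inv]

lemma contDiffAt_log_norm {n : WithTop ℕ∞} (hx : x ≠ 0) :
    ContDiffAt ℝ n (fun y : E ↦ Real.log ‖y‖) x :=
  (contDiffAt_norm ℝ hx).log (norm_ne_zero_iff.2 hx)

lemma differentiableAt_iteratedFDeriv_log_norm (n : ℕ) (hx : x ≠ 0) :
    DifferentiableAt ℝ (iteratedFDeriv ℝ n fun y : E ↦ Real.log ‖y‖) x :=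
  (contDiffAt_log_norm (n := (n + 1 : ℕ)) hx).differentiableAt_iteratedFDeriv
    (mod_cast n.lt_succ_self)

lemma iteratedFDeriv_one_log_norm (hx : x ≠ 0) (v : Fin 1 → E) :
    iteratedFDeriv ℝ 1 (fun y : E ↦ Real.log ‖y‖) x v = ‖x‖ ^ (-2 : ℤ) * ⟪v 0, x⟫ := by
  rw [iteratedFDeriv_one_apply, (hasFDerivAt_log_norm hx).fderiv]
  simp [real_inner_comm]

lemma iteratedFDeriv_two_log_norm (hx : x ≠ 0) (v : Fin 2 → E) :
    iteratedFDeriv ℝ 2 (fun y : E ↦ Real.log ‖y‖) x v =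
      ‖x‖ ^ (-2 : ℤ) * ⟪v 0, v 1⟫ - 2 * ‖x‖ ^ (-4 : ℤ) * (⟪v 0, x⟫ * ⟪v 1, x⟫) := by
  have hderiv := (hasFDerivAt_norm_zpow (-2) hx).mul (innerSL ℝ (v 1)).hasFDerivAt
  have hgradient : (fun y ↦ iteratedFDeriv ℝ 1 (fun y : E ↦ Real.log ‖y‖) y (Fin.tail v))
      =ᶠ[nhds x] fun y ↦ ‖y‖ ^ (-2 : ℤ) * ⟪v 1, y⟫ := by
    filter_upwards [isOpen_ne.mem_nhds hx] with y hy using iteratedFDeriv_one_log_norm hy _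
  rw [iteratedFDeriv_succ_apply_eq_of_hasFDerivAt (differentiableAt_iteratedFDeriv_log_norm 1 hx)
    hgradient hderiv]
  simp only [coe_innerSL_apply, real_inner_comm (v 0), Int.reduceNeg, Int.cast_neg, Int.cast_ofNat,
    Int.reduceSub, _root_.add_apply, _root_.smul_apply, smul_eq_mul]
  ring

lemma iteratedFDeriv_three_log_norm (hx : x ≠ 0) (v : Fin 3 → E) :
    iteratedFDeriv ℝ 3 (fun y : E ↦ Real.log ‖y‖) x v =
      8 * ‖x‖ ^ (-6 : ℤ) * (⟪v 0, x⟫ * ⟪v 1, x⟫ * ⟪v 2, x⟫) - 2 * ‖x‖ ^ (-4 : ℤ) *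
        (⟪v 0, v 1⟫ * ⟪v 2, x⟫ + ⟪v 0, v 2⟫ * ⟪v 1, x⟫ + ⟪v 1, v 2⟫ * ⟪v 0, x⟫) := by
  have hderiv := ((hasFDerivAt_norm_zpow (-2) hx).mul_const ⟪v 1, v 2⟫).sub
    (((hasFDerivAt_norm_zpow (-4) hx).const_mul 2).mul
      ((innerSL ℝ (v 1)).hasFDerivAt.mul (innerSL ℝ (v 2)).hasFDerivAt))
  have hhessian : (fun y ↦ iteratedFDeriv ℝ 2 (fun y : E ↦ Real.log ‖y‖) y (Fin.tail v))
      =ᶠ[nhds x] fun y ↦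
        ‖y‖ ^ (-2 : ℤ) * ⟪v 1, v 2⟫ - 2 * ‖y‖ ^ (-4 : ℤ) * (⟪v 1, y⟫ * ⟪v 2, y⟫) := by
    filter_upwards [isOpen_ne.mem_nhds hx] with y hy using iteratedFDeriv_two_log_norm hy _
  rw [iteratedFDeriv_succ_apply_eq_of_hasFDerivAt (differentiableAt_iteratedFDeriv_log_norm 2 hx)
    hhessian hderiv]
  simp only [coe_innerSL_apply, real_inner_comm (v 0), Int.reduceNeg, Int.cast_neg, Int.cast_ofNat,
    Int.reduceSub, Pi.mul_apply, smul_add, _root_.sub_apply, _root_.add_apply, _root_.smul_apply,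
    smul_eq_mul]
  ring

end LogNorm

section Frobenius

variable {ι E : Type*} [Fintype ι]

/-- The squared Frobenius norm, in the family of vectors `b`, of an `n`-tensor `T` given as a
function of `n` vectors; for an orthonormal basis `b` this is `|T|²`. Multilinearity of `T` is not
required, so that no structure has to be carried along when an argument of `T` is fixed. -/
def frobeniusSq {n : ℕ} (b : ι → E) (T : (Fin n → E) → ℝ) : ℝ :=
  ∑ i : Fin n → ι, T (fun k ↦ b (i k)) ^ 2

lemma frobeniusSq_zero (b : ι → E) (T : (Fin 0 → E) → ℝ) : frobeniusSq b T = T ![] ^ 2 := by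
  rw [frobeniusSq, Fintype.sum_unique, Subsingleton.elim (fun k ↦ b _) ![]]

lemma frobeniusSq_succ {n : ℕ} (b : ι → E) (T : (Fin (n + 1) → E) → ℝ) :
    frobeniusSq b T = ∑ i, frobeniusSq b fun v ↦ T (Matrix.vecCons (b i) v) := by
  simp only [frobeniusSq]
  rw [← (Fin.consEquiv fun _ : Fin (n + 1) ↦ ι).sum_comp, Fintype.sum_prod_type]
  refine Finset.sum_congr rfl fun i _ ↦ Finset.sum_congr rfl fun j _ ↦ ?_
  congr 2 with k
  cases k using Fin.cases <;> rfl

lemma frobeniusSq_one (b : ι → E) (T : (Fin 1 → E) → ℝ) :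
    frobeniusSq b T = ∑ i, T ![b i] ^ 2 := by
  simp only [frobeniusSq_succ, frobeniusSq_zero]

lemma frobeniusSq_two (b : ι → E) (T : (Fin 2 → E) → ℝ) :
    frobeniusSq b T = ∑ i, ∑ j, T ![b i, b j] ^ 2 := by
  simp only [frobeniusSq_succ, frobeniusSq_zero]

lemma frobeniusSq_three (b : ι → E) (T : (Fin 3 → E) → ℝ) :
    frobeniusSq b T = ∑ i, ∑ j, ∑ k, T ![b i, b j, b k] ^ 2 := by
  simp only [frobeniusSq_succ, frobeniusSq_zero]

end Frobenius

section AxisymmetricTensors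

variable {ι E : Type*} [Fintype ι] [NormedAddCommGroup E] [InnerProductSpace ℝ E]
  (b : OrthonormalBasis ι ℝ E) (x : E) (p q : ℝ)

lemma sum_sq_axisymmetric_two_slice (u : E) :
    ∑ j, (p * ⟪u, b j⟫ - q * (⟪u, x⟫ * ⟪b j, x⟫)) ^ 2 =
      p ^ 2 * ‖u‖ ^ 2 + (q ^ 2 * ‖x‖ ^ 2 - 2 * p * q) * ⟪u, x⟫ ^ 2 := by
  calc _ = ∑ j, ⟪b j, p • u - (q * ⟪u, x⟫) • x⟫ ^ 2 := by
        simp only [inner_sub_right, inner_smul_right, real_inner_comm u, mul_assoc]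
    _ = _ := by
        rw [b.sum_sq_inner_right, norm_sub_sq_real]
        simp only [norm_smul, mul_pow, Real.norm_eq_abs, sq_abs, real_inner_smul_left,
          real_inner_smul_right]
        ring

lemma sum_sq_axisymmetric_three_slice (u v : E) :
    ∑ k, (q * (⟪u, x⟫ * ⟪v, x⟫ * ⟪b k, x⟫) -
        p * (⟪u, v⟫ * ⟪b k, x⟫ + ⟪u, b k⟫ * ⟪v, x⟫ + ⟪v, b k⟫ * ⟪u, x⟫)) ^ 2 =
      ‖x‖ ^ 2 * (p * ⟪u, v⟫ - q * (⟪u, x⟫ * ⟪v, x⟫)) ^ 2 +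
        6 * p ^ 2 * (⟪u, v⟫ * ⟪v, x⟫ * ⟪u, x⟫) - 4 * p * q * (⟪u, x⟫ ^ 2 * ⟪v, x⟫ ^ 2) +
        p ^ 2 * (‖v‖ ^ 2 * ⟪u, x⟫ ^ 2 + ‖u‖ ^ 2 * ⟪v, x⟫ ^ 2) := by
  set c := p * ⟪u, v⟫ - q * (⟪u, x⟫ * ⟪v, x⟫) with hc
  calc _ = ∑ k, ⟪b k, c • x + p • (⟪v, x⟫ • u + ⟪u, x⟫ • v)⟫ ^ 2 := by
        refine Finset.sum_congr rfl fun k _ ↦ ?_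
        simp only [inner_add_right, inner_smul_right, real_inner_comm u (b k),
          real_inner_comm v (b k), hc]
        ring
    _ = _ := by
        rw [b.sum_sq_inner_right, norm_add_sq_real, norm_smul p, mul_pow, norm_add_sq_real]
        simp only [norm_smul, mul_pow, Real.norm_eq_abs, sq_abs, real_inner_smul_left,
          real_inner_smul_right, inner_add_right, real_inner_comm u x, real_inner_comm v x, hc]
        ring

lemma frobeniusSq_axisymmetric_two :
    frobeniusSq b (fun v : Fin 2 → E ↦ p * ⟪v 0, v 1⟫ - q * (⟪v 0, x⟫ * ⟪v 1, x⟫)) =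
      p ^ 2 * Fintype.card ι - 2 * p * q * ‖x‖ ^ 2 + q ^ 2 * ‖x‖ ^ 4 := by
  simp only [frobeniusSq_two, Matrix.cons_val, sum_sq_axisymmetric_two_slice, b.norm_eq_one,
    Finset.sum_add_distrib, ← Finset.mul_sum, b.sum_sq_inner_right, Finset.sum_const,
    Finset.card_univ, nsmul_eq_mul]
  ring

lemma frobeniusSq_axisymmetric_three :
    frobeniusSq b (fun v : Fin 3 → E ↦ q * (⟪v 0, x⟫ * ⟪v 1, x⟫ * ⟪v 2, x⟫) - p *
        (⟪v 0, v 1⟫ * ⟪v 2, x⟫ + ⟪v 0, v 2⟫ * ⟪v 1, x⟫ + ⟪v 1, v 2⟫ * ⟪v 0, x⟫)) =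
      p ^ 2 * (3 * Fintype.card ι + 6) * ‖x‖ ^ 2 - 6 * p * q * ‖x‖ ^ 4 + q ^ 2 * ‖x‖ ^ 6 := by
  have htwo := frobeniusSq_axisymmetric_two b x p q
  simp only [frobeniusSq_two, Matrix.cons_val] at htwo
  simp only [frobeniusSq_three, Matrix.cons_val, sum_sq_axisymmetric_three_slice, b.norm_eq_one,
    Finset.sum_add_distrib, Finset.sum_sub_distrib, ← Finset.mul_sum, htwo,
    ← Finset.sum_mul, b.sum_inner_mul_inner, ← sq, b.sum_sq_inner_right, Finset.sum_const,
    Finset.card_univ, nsmul_eq_mul]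
  ring

end AxisymmetricTensors

section LogNormFrobenius

variable {ι E : Type*} [Fintype ι] [NormedAddCommGroup E] [InnerProductSpace ℝ E]
  (b : OrthonormalBasis ι ℝ E) {x : E}

lemma frobeniusSq_iteratedFDeriv_one_log_norm (hx : x ≠ 0) :
    frobeniusSq b (iteratedFDeriv ℝ 1 (fun y : E ↦ Real.log ‖y‖) x) * ‖x‖ ^ 2 = 1 := by
  have hx' : ‖x‖ ≠ 0 := norm_ne_zero_iff.2 hx
  simp only [frobeniusSq_one, iteratedFDeriv_one_log_norm hx, Matrix.cons_val, mul_pow,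
    ← Finset.mul_sum, b.sum_sq_inner_right]
  field_simp

lemma frobeniusSq_iteratedFDeriv_two_log_norm (hx : x ≠ 0) :
    frobeniusSq b (iteratedFDeriv ℝ 2 (fun y : E ↦ Real.log ‖y‖) x) * ‖x‖ ^ 4 =
      Fintype.card ι := by
  have hx' : ‖x‖ ≠ 0 := norm_ne_zero_iff.2 hx
  rw [funext (iteratedFDeriv_two_log_norm hx), frobeniusSq_axisymmetric_two]
  field_simp
  ring

lemma frobeniusSq_iteratedFDeriv_three_log_norm (hx : x ≠ 0) :
    frobeniusSq b (iteratedFDeriv ℝ 3 (fun y : E ↦ Real.log ‖y‖) x) * ‖x‖ ^ 6 =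
      12 * Fintype.card ι - 8 := by
  have hx' : ‖x‖ ≠ 0 := norm_ne_zero_iff.2 hx
  rw [funext (iteratedFDeriv_three_log_norm hx), frobeniusSq_axisymmetric_three]
  field_simp
  ring

end LogNormFrobenius

section Constants

lemma sum_mixedPartial_sq {N m : ℕ} (u : EuclideanSpace ℝ (Fin N) → ℝ)
    (x : EuclideanSpace ℝ (Fin N)) :
    ∑ i : Fin m → Fin N, mixedPartial N m u i x ^ 2 =
      frobeniusSq (EuclideanSpace.basisFun (Fin N) ℝ) (iteratedFDeriv ℝ m u x) := by
  simp only [mixedPartial, frobeniusSq, EuclideanSpace.basisFun_apply]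

lemma sum_mixedPartial_one_logNorm_sq {N : ℕ} {x : EuclideanSpace ℝ (Fin N)} (hx : x ≠ 0) :
    (∑ i : Fin 1 → Fin N, mixedPartial N 1 (logNorm N) i x ^ 2) * ‖x‖ ^ 2 = 1 := by
  rw [sum_mixedPartial_sq]
  exact frobeniusSq_iteratedFDeriv_one_log_norm _ hx

lemma sum_mixedPartial_two_logNorm_sq {N : ℕ} {x : EuclideanSpace ℝ (Fin N)} (hx : x ≠ 0) :
    (∑ i : Fin 2 → Fin N, mixedPartial N 2 (logNorm N) i x ^ 2) * ‖x‖ ^ 4 = N := by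
  rw [sum_mixedPartial_sq]
  exact (frobeniusSq_iteratedFDeriv_two_log_norm _ hx).trans (by rw [Fintype.card_fin])

lemma sum_mixedPartial_three_logNorm_sq {N : ℕ} {x : EuclideanSpace ℝ (Fin N)} (hx : x ≠ 0) :
    (∑ i : Fin 3 → Fin N, mixedPartial N 3 (logNorm N) i x ^ 2) * ‖x‖ ^ 6 = 12 * N - 8 := by
  rw [sum_mixedPartial_sq]
  exact (frobeniusSq_iteratedFDeriv_three_log_norm _ hx).trans (by rw [Fintype.card_fin])

lemma ell_eq_of_sum_mixedPartial_sq {N k : ℕ} {c : ℝ} (hN : 0 < N)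
    (h : ∀ x : EuclideanSpace ℝ (Fin N), x ≠ 0 →
      (∑ i : Fin N → Fin N, mixedPartial N N (logNorm N) i x ^ 2) * ‖x‖ ^ k = c) :
    ell N hN = c := by
  simpa [ell] using h (EuclideanSpace.single ⟨0, hN⟩ 1) (by simp)

lemma omegaSphere_one : omegaSphere 1 = 2 := by
  have hvol := InnerProductSpace.volume_ball_of_dim_odd (E := EuclideanSpace ℝ (Fin 1)) (k := 0)
    (by simp) 0 1
  simp [omegaSphere, hvol]

lemma omegaSphere_two : omegaSphere 2 = 2 * Real.pi := by
  simp [omegaSphere, Real.pi_nonneg]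

lemma omegaSphere_three : omegaSphere 3 = 4 * Real.pi := by
  have hpi : 0 ≤ Real.pi * 4 / 3 := by positivity
  rw [omegaSphere, EuclideanSpace.volume_ball_fin_three, ENNReal.ofReal_one, one_pow, one_mul,
    ENNReal.toReal_ofReal hpi, Nat.cast_ofNat]
  ring

end Constants

/-- `ℓ_1 = 1`, `ℓ_2 = 2`, `ℓ_3 = 28`, in the form
`∑ (∂^N log|x|)² ⋅ |x|^{2N} = ℓ_N` on `ℝ^N∖{0}`, and consequently
`K_1 = 1/2`, `K_2 = 1/(2π√2)`, `K_3 = 1/(4π√28)`. -/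
theorem statement17 :
    (∀ x : EuclideanSpace ℝ (Fin 1), x ≠ 0 →
      (∑ i : Fin 1 → Fin 1, mixedPartial 1 1 (logNorm 1) i x ^ 2) * ‖x‖ ^ 2 = 1) ∧
    (∀ x : EuclideanSpace ℝ (Fin 2), x ≠ 0 →
      (∑ i : Fin 2 → Fin 2, mixedPartial 2 2 (logNorm 2) i x ^ 2) * ‖x‖ ^ 4 = 2) ∧
    (∀ x : EuclideanSpace ℝ (Fin 3), x ≠ 0 →
      (∑ i : Fin 3 → Fin 3, mixedPartial 3 3 (logNorm 3) i x ^ 2) * ‖x‖ ^ 6 = 28) ∧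
    (Real.sqrt (ell 1 (by norm_num)) * omegaSphere 1)⁻¹ = 1 / 2 ∧
    (Real.sqrt (ell 2 (by norm_num)) * omegaSphere 2)⁻¹ = 1 / (2 * Real.pi * Real.sqrt 2) ∧
    (Real.sqrt (ell 3 (by norm_num)) * omegaSphere 3)⁻¹ = 1 / (4 * Real.pi * Real.sqrt 28) := by
  have hfirst (x : EuclideanSpace ℝ (Fin 1)) (hx : x ≠ 0) := sum_mixedPartial_one_logNorm_sq hx
  have hsecond (x : EuclideanSpace ℝ (Fin 2)) (hx : x ≠ 0) :
      (∑ i : Fin 2 → Fin 2, mixedPartial 2 2 (logNorm 2) i x ^ 2) * ‖x‖ ^ 4 = 2 :=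
    mod_cast sum_mixedPartial_two_logNorm_sq hx
  have hthird (x : EuclideanSpace ℝ (Fin 3)) (hx : x ≠ 0) :
      (∑ i : Fin 3 → Fin 3, mixedPartial 3 3 (logNorm 3) i x ^ 2) * ‖x‖ ^ 6 = 28 :=
    (sum_mixedPartial_three_logNorm_sq hx).trans (by norm_num)
  refine ⟨hfirst, hsecond, hthird, ?_, ?_, ?_⟩
  · rw [ell_eq_of_sum_mixedPartial_sq _ hfirst, omegaSphere_one]
    norm_num
  · rw [ell_eq_of_sum_mixedPartial_sq _ hsecond, omegaSphere_two, one_div, mul_comm]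
  · rw [ell_eq_of_sum_mixedPartial_sq _ hthird, omegaSphere_three, one_div, mul_comm]
end
end
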